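/- arXiv:1609.00290 — 3 statements merged into one kernel-verified Lean document; each statement's English description precedes it below -/
import Mathlib

section
/- For every integer k ≥ 1, the function z ↦ z·f_{k−1}(z)/f_k(z) is a continuous, strictly increasing bijection from (0,∞) onto (k,∞). In particular, for every real c > k there is a unique z > 0 with z·f_{k−1}(z)/f_k(z) = c. -/
/-- `fk k x = ∑_{j ≥ k} x^j / j!`, the tail of the exponential series. -/
noncomputable def fk (k : ℕ) (x : ℝ) : ℝ := ∑' n : ℕ, x ^ (n + k) / (n + k).factorial

/-!
Multiplying the parameter of a conditioned Poisson variable `J` by `r > 1` tilts its weights by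
`r ^ J`. As `J` and `r ^ J` are increasing functions of `J`, Chebyshev's association inequality
says that they are positively correlated, so the tilt increases the mean. Moreover the mean at `z`
is `z + k * P(J = k)`, hence lies between `z` and `z + k`; with continuity, the intermediate value
theorem on `[c - k, c]` gives every value `c > k`.
-/

open Set

theorem mul_lt_mul_of_hasSum_of_strictMono {ι : Type*} {w p : ι → ℝ} {φ : ℝ → ℝ} {a b c d : ℝ}
    (hφ : StrictMono φ) (hw : ∀ i, 0 ≤ w i) {i j : ι} (hi : 0 < w i) (hj : 0 < w j)
    (hij : p i ≠ p j) (ha : HasSum w a) (hb : HasSum (fun i => p i * w i) b)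
    (hc : HasSum (fun i => φ (p i) * w i) c) (hd : HasSum (fun i => p i * (φ (p i) * w i)) d) :
    b * c < a * d := by
  have ha_pos : 0 < a := ha.tsum_eq ▸ ha.summable.tsum_pos hw i hi
  -- Centered at the mean `m` of `p` and at `φ m`, the two factors have the same sign.
  obtain ⟨m, rfl⟩ : ∃ m, b = m * a := ⟨b / a, (div_mul_cancel₀ b ha_pos.ne').symm⟩
  have hsum : HasSum (fun i => (p i - m) * (φ (p i) - φ m) * w i) (d - m * c) := by
    have hcentered : HasSum (fun i => p i * w i - m * w i) 0 := by
      simpa only [sub_self] using hb.sub (ha.mul_left m)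
    rw [← sub_zero (d - m * c), ← mul_zero (φ m)]
    exact ((hd.sub (hc.mul_left m)).sub (hcentered.mul_left (φ m))).congr_fun fun i => by ring
  have hprod_nonneg (x : ℝ) : 0 ≤ (x - m) * (φ x - φ m) :=
    (monotone_id.monovary hφ.monotone).sub_mul_sub_nonneg m x
  have hprod_pos {x : ℝ} (hx : x ≠ m) : 0 < (x - m) * (φ x - φ m) :=
    (hprod_nonneg x).lt_of_ne'
      (mul_ne_zero (sub_ne_zero.2 hx) (sub_ne_zero.2 (hφ.injective.ne hx)))
  obtain ⟨l, hl, hlm⟩ : ∃ l, 0 < w l ∧ p l ≠ m := by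
    by_cases him : p i = m
    · exact ⟨j, hj, him ▸ hij.symm⟩
    · exact ⟨i, hi, him⟩
  have hpos : 0 < d - m * c := hsum.tsum_eq ▸ hsum.summable.tsum_pos
    (fun i => mul_nonneg (hprod_nonneg _) (hw i)) l (mul_pos (hprod_pos hlm) hl)
  calc m * a * c = a * (m * c) := by ring
    _ < a * d := mul_lt_mul_of_pos_left (sub_pos.1 hpos) ha_pos

theorem hasSum_fk (k : ℕ) (z : ℝ) :
    HasSum (fun n : ℕ => z ^ (n + k) / (n + k).factorial) (fk k z) :=
  ((summable_nat_add_iff k).2 (Real.summable_pow_div_factorial z)).hasSum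

theorem fk_eq_exp_sub_sum (k : ℕ) (z : ℝ) :
    fk k z = Real.exp z - ∑ j ∈ Finset.range k, z ^ j / j.factorial := by
  rw [Real.exp_eq_exp_ℝ, NormedSpace.exp_eq_tsum_div, eq_sub_iff_add_eq']
  exact (Real.summable_pow_div_factorial z).sum_add_tsum_nat_add k

theorem fk_eq_add_fk_succ (k : ℕ) (z : ℝ) : fk k z = z ^ k / k.factorial + fk (k + 1) z := by
  rw [fk_eq_exp_sub_sum, fk_eq_exp_sub_sum, Finset.sum_range_succ]
  ring

theorem continuous_fk (k : ℕ) : Continuous (fk k) := by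
  rw [funext (fk_eq_exp_sub_sum k)]
  fun_prop

theorem pow_div_factorial_le_fk (k : ℕ) {z : ℝ} (hz : 0 ≤ z) : z ^ k / k.factorial ≤ fk k z := by
  simpa only [zero_add] using le_hasSum (hasSum_fk k z) 0 fun n _ => by positivity

theorem fk_pos (k : ℕ) {z : ℝ} (hz : 0 < z) : 0 < fk k z :=
  (by positivity : 0 < z ^ k / k.factorial).trans_le (pow_div_factorial_le_fk k hz.le)

/-- The mean of a Poisson variable with parameter `z > 0` conditioned to be at least `k`: the value
`n + k` has weight `z ^ (n + k) / (n + k)!`, and `fk k z` is the total weight. -/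
noncomputable def condPoissonMean (k : ℕ) (z : ℝ) : ℝ :=
  (∑' n : ℕ, ((n + k : ℕ) : ℝ) * (z ^ (n + k) / (n + k).factorial)) / fk k z

theorem succ_mul_pow_succ_div_factorial (n : ℕ) (z : ℝ) :
    ((n + 1 : ℕ) : ℝ) * (z ^ (n + 1) / (n + 1).factorial) = z * (z ^ n / n.factorial) := by
  rw [Nat.factorial_succ, pow_succ]
  push_cast
  field_simp

theorem hasSum_mul_pow_div_factorial (k : ℕ) (z : ℝ) :
    HasSum (fun n : ℕ => ((n + k : ℕ) : ℝ) * (z ^ (n + k) / (n + k).factorial))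
      (k * (z ^ k / k.factorial) + z * fk k z) := by
  rw [← hasSum_nat_add_iff' 1]
  simpa only [Finset.sum_range_one, zero_add, add_sub_cancel_left, add_right_comm _ 1 k,
    succ_mul_pow_succ_div_factorial] using (hasSum_fk k z).mul_left z

theorem condPoissonMean_eq_div (k : ℕ) (z : ℝ) :
    condPoissonMean k z = (k * (z ^ k / k.factorial) + z * fk k z) / fk k z := by
  rw [condPoissonMean, (hasSum_mul_pow_div_factorial k z).tsum_eq]

theorem condPoissonMean_succ (k : ℕ) (z : ℝ) :
    condPoissonMean (k + 1) z = z * fk k z / fk (k + 1) z := by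
  rw [condPoissonMean_eq_div, succ_mul_pow_succ_div_factorial, ← mul_add, ← fk_eq_add_fk_succ]

theorem le_condPoissonMean (k : ℕ) {z : ℝ} (hz : 0 < z) : z ≤ condPoissonMean k z := by
  rw [condPoissonMean_eq_div, le_div_iff₀ (fk_pos k hz)]
  exact le_add_of_nonneg_left (by positivity)

theorem condPoissonMean_le_add (k : ℕ) {z : ℝ} (hz : 0 < z) : condPoissonMean k z ≤ k + z := by
  rw [condPoissonMean_eq_div, div_le_iff₀ (fk_pos k hz), add_mul]
  gcongr
  exact pow_div_factorial_le_fk k hz.le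

theorem lt_condPoissonMean (k : ℕ) {z : ℝ} (hz : 0 < z) : (k : ℝ) < condPoissonMean k z := by
  rw [condPoissonMean_eq_div, lt_div_iff₀ (fk_pos k hz)]
  refine hasSum_lt (i := 1) (fun n => ?_) ?_ ((hasSum_fk k z).mul_left (k : ℝ))
    (hasSum_mul_pow_div_factorial k z)
  · dsimp only
    gcongr
    exact Nat.le_add_left k n
  · gcongr
    exact Nat.lt_add_of_pos_left one_pos

theorem continuousOn_condPoissonMean (k : ℕ) : ContinuousOn (condPoissonMean k) (Ioi 0) := by
  rw [funext (condPoissonMean_eq_div k)]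
  have hfk := continuous_fk k
  exact ContinuousOn.div (by fun_prop) hfk.continuousOn fun z hz => (fk_pos k hz).ne'

theorem strictMonoOn_condPoissonMean (k : ℕ) : StrictMonoOn (condPoissonMean k) (Ioi 0) := by
  intro x hx y hy hxy
  rw [mem_Ioi] at hx hy
  have htilt (n : ℕ) :
      (y / x) ^ (n : ℝ) * (x ^ n / n.factorial) = y ^ n / n.factorial := by
    rw [Real.rpow_natCast, div_pow]
    field_simp
  rw [condPoissonMean_eq_div, condPoissonMean_eq_div, div_lt_div_iff₀ (fk_pos k hx) (fk_pos k hy),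
    mul_comm (_ + _) (fk k x)]
  refine mul_lt_mul_of_hasSum_of_strictMono (p := fun n => ((n + k : ℕ) : ℝ)) (i := 0) (j := 1)
    (Real.strictMono_rpow_of_base_gt_one ((one_lt_div hx).2 hxy)) (fun n => by positivity)
    (by positivity) (by positivity) (by simp) (hasSum_fk k x) (hasSum_mul_pow_div_factorial k x)
    ?_ ?_
  · simpa only [htilt] using hasSum_fk k y
  · simpa only [htilt] using hasSum_mul_pow_div_factorial k y

theorem surjOn_condPoissonMean (k : ℕ) : SurjOn (condPoissonMean k) (Ioi 0) (Ioi (k : ℝ)) := by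
  intro c hc
  have hleft : 0 < c - k := sub_pos.2 hc
  have hright : 0 < c := k.cast_nonneg.trans_lt hc
  refine (continuousOn_condPoissonMean k).surjOn_Icc hleft hright
    ⟨?_, le_condPoissonMean k hright⟩
  simpa only [add_sub_cancel] using condPoissonMean_le_add k hleft

theorem bijOn_condPoissonMean (k : ℕ) : BijOn (condPoissonMean k) (Ioi 0) (Ioi (k : ℝ)) :=
  ⟨fun _ hz => lt_condPoissonMean k hz, (strictMonoOn_condPoissonMean k).injOn,
    surjOn_condPoissonMean k⟩

theorem conditioned_poisson_mean_bijective (k : ℕ) (hk : 1 ≤ k) :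
    ContinuousOn (fun z : ℝ => z * fk (k - 1) z / fk k z) (Set.Ioi 0) ∧
    StrictMonoOn (fun z : ℝ => z * fk (k - 1) z / fk k z) (Set.Ioi 0) ∧
    Set.BijOn (fun z : ℝ => z * fk (k - 1) z / fk k z) (Set.Ioi 0) (Set.Ioi (k : ℝ)) ∧
    ∀ c : ℝ, (k : ℝ) < c → ∃! z : ℝ, 0 < z ∧ z * fk (k - 1) z / fk k z = c := by
  obtain ⟨k, rfl⟩ := Nat.exists_eq_add_of_le' hk
  simp only [Nat.add_sub_cancel, ← condPoissonMean_succ]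
  have hbij := bijOn_condPoissonMean (k + 1)
  refine ⟨continuousOn_condPoissonMean _, strictMonoOn_condPoissonMean _, hbij, fun c hc => ?_⟩
  obtain ⟨z, hz, hzc⟩ := hbij.surjOn hc
  exact ⟨z, ⟨hz, hzc⟩, fun w hw => hbij.injOn hw.1 hz (hw.2.trans hzc.symm)⟩
end

section
/- Fix reals k1 > 0, σ > k1, and ρ ∈ (0,1). Set u_min := k1·(1−ρ)/(ρ·(σ−k1·ρ)) and ρ* := 2k1/( k1 + σ + √((σ−k1)·(σ+3k1)) ). Then: (i) the function u ↦ u^{−k1·ρ}·(1−ρ+u·ρ²)^{σ} on (0,∞) attains its unique global minimum at u = u_min; (ii) u_min ≥ 1 if and only if ρ ≤ ρ*. -/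
/-!
Let `m` be the critical point of `u ↦ u ^ (-a) * (c + d * u) ^ s`. There the linear term carries the
fraction `d * m / (c + d * m) = a / s` of the affine factor, so with `t = u / m` the affine factor
grows by the ratio `1 + a / s * (t - 1)`. By Bernoulli's inequality this ratio exceeds
`t ^ (a / s)`, and raising to the power `s` shows that the affine factor gains more than `u ^ (-a)`
loses.

Clearing denominators turns `1 ≤ u_min` into `0 ≤ k₁ * ρ ^ 2 - (k₁ + σ) * ρ + k₁`. The roots of this
quadratic have product `1`, so `ρ < 1` lies below the larger root, and the sign of the quadratic is
decided by the smaller root, which is `ρ*` with its numerator rationalized.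
-/

section Minimizer

variable {a s : ℝ}

theorem one_lt_rpow_neg_mul_rpow {t : ℝ} (ha : 0 < a) (has : a < s) (ht : 0 < t) (ht1 : t ≠ 1) :
    1 < t ^ (-a) * (1 + a / s * (t - 1)) ^ s := by
  have hs : 0 < s := ha.trans has
  have bernoulli : t ^ (a / s) < 1 + a / s * (t - 1) := by
    simpa only [add_sub_cancel] using
      rpow_one_add_lt_one_add_mul_self (s := t - 1) (by linarith) (sub_ne_zero.2 ht1)
        (div_pos ha hs) ((div_lt_one hs).2 has)
  calc
    1 = t ^ (-a) * (t ^ (a / s)) ^ s := by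
      rw [← Real.rpow_mul ht.le, div_mul_cancel₀ a hs.ne', ← Real.rpow_add ht, neg_add_cancel,
        Real.rpow_zero]
    _ < t ^ (-a) * (1 + a / s * (t - 1)) ^ s := by gcongr

theorem rpow_neg_mul_affine_rpow_lt {c d m u : ℝ} (ha : 0 < a) (has : a < s) (hc : 0 < c)
    (hd : 0 < d) (hm : m = a * c / (d * (s - a))) (hu : 0 < u) (hum : u ≠ m) :
    m ^ (-a) * (c + m * d) ^ s < u ^ (-a) * (c + u * d) ^ s := by
  have hs : 0 < s := ha.trans has
  have hgap : 0 < s - a := sub_pos.2 has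
  have hm_pos : 0 < m := by rw [hm]; positivity
  have critical : m * d * s = a * (c + m * d) := by
    rw [hm]
    field_simp
    ring
  have affine_ratio : c + u * d = (c + m * d) * (1 + a / s * (u / m - 1)) := by
    field_simp
    linear_combination (u - m) * critical
  have ratio_pos : 0 < 1 + a / s * (u / m - 1) :=
    pos_of_mul_pos_right (affine_ratio ▸ (by positivity : 0 < c + u * d)) (by positivity)
  calc
    m ^ (-a) * (c + m * d) ^ s
        < m ^ (-a) * (c + m * d) ^ s * ((u / m) ^ (-a) * (1 + a / s * (u / m - 1)) ^ s) :=
      lt_mul_of_one_lt_right (by positivity)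
        (one_lt_rpow_neg_mul_rpow ha has (by positivity) (mt (div_eq_one_iff_eq hm_pos.ne').1 hum))
    _ = (m * (u / m)) ^ (-a) * ((c + m * d) * (1 + a / s * (u / m - 1))) ^ s := by
      rw [Real.mul_rpow hm_pos.le (by positivity), Real.mul_rpow (by positivity) ratio_pos.le]
      ring
    _ = u ^ (-a) * (c + u * d) ^ s := by
      rw [mul_div_cancel₀ u hm_pos.ne', ← affine_ratio]

end Minimizer

section Threshold

variable {K : Type*} [Field K] [LinearOrder K] [IsStrictOrderedRing K]

theorem one_le_div_iff_quadratic_nonneg {k σ ρ : K} (hρ : 0 < ρ) (hkρ : k * ρ < σ) :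
    1 ≤ k * (1 - ρ) / (ρ * (σ - k * ρ)) ↔ 0 ≤ k * ρ ^ 2 - (k + σ) * ρ + k := by
  have hgap : 0 < σ - k * ρ := sub_pos.2 hkρ
  rw [one_le_div (mul_pos hρ hgap), ← sub_nonneg]
  ring_nf

theorem quadratic_nonneg_iff_le_root {a b c r x : K} (hr : r ^ 2 = b ^ 2 - 4 * a * c) (hc : 0 < c)
    (hbr : 0 < b + r) (hx : x * (b - r) < 2 * c) :
    0 ≤ a * x ^ 2 - b * x + c ↔ x ≤ 2 * c / (b + r) := by
  have factorization : (2 * c - x * (b + r)) * (2 * c - x * (b - r)) =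
      4 * c * (a * x ^ 2 - b * x + c) := by
    linear_combination -x ^ 2 * hr
  calc
    0 ≤ a * x ^ 2 - b * x + c ↔ 0 ≤ (2 * c - x * (b + r)) * (2 * c - x * (b - r)) := by
      rw [factorization, mul_nonneg_iff_of_pos_left (by positivity)]
    _ ↔ 0 ≤ 2 * c - x * (b + r) := mul_nonneg_iff_of_pos_right (sub_pos.2 hx)
    _ ↔ x ≤ 2 * c / (b + r) := by rw [sub_nonneg, le_div_iff₀ hbr]

theorem quadratic_nonneg_iff_le_sqrt_root {k σ ρ : ℝ} (hk : 0 < k) (hσ : k ≤ σ) (hρ : ρ < 1) :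
    0 ≤ k * ρ ^ 2 - (k + σ) * ρ + k ↔
      ρ ≤ 2 * k / (k + σ + Real.sqrt ((σ - k) * (σ + 3 * k))) := by
  have hgap : 0 ≤ σ - k := sub_nonneg.2 hσ
  have hσ_pos : 0 < σ := hk.trans_le hσ
  have sq_sqrt := Real.sq_sqrt (mul_nonneg hgap (by positivity : 0 ≤ σ + 3 * k))
  have le_sqrt : σ - k ≤ Real.sqrt ((σ - k) * (σ + 3 * k)) :=
    Real.le_sqrt_of_sq_le (by rw [sq]; exact mul_le_mul_of_nonneg_left (by linarith) hgap)
  have sqrt_lt : Real.sqrt ((σ - k) * (σ + 3 * k)) < k + σ :=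
    (Real.sqrt_lt' (by positivity)).2 (by linarith [pow_pos hk 2])
  refine quadratic_nonneg_iff_le_root (by linear_combination sq_sqrt) hk (by positivity) ?_
  calc
    ρ * (k + σ - Real.sqrt ((σ - k) * (σ + 3 * k)))
        < k + σ - Real.sqrt ((σ - k) * (σ + 3 * k)) := mul_lt_of_lt_one_left (sub_pos.2 sqrt_lt) hρ
    _ ≤ 2 * k := by linarith

end Threshold

theorem chernoff_exponent_minimizer (k1 σ ρ : ℝ) (hk1 : 0 < k1) (hσ : k1 < σ)
    (hρ : ρ ∈ Set.Ioo (0 : ℝ) 1) :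
    (∀ u : ℝ, 0 < u → u ≠ k1 * (1 - ρ) / (ρ * (σ - k1 * ρ)) →
      (k1 * (1 - ρ) / (ρ * (σ - k1 * ρ))) ^ (-(k1 * ρ)) *
          (1 - ρ + (k1 * (1 - ρ) / (ρ * (σ - k1 * ρ))) * ρ ^ 2) ^ σ <
        u ^ (-(k1 * ρ)) * (1 - ρ + u * ρ ^ 2) ^ σ) ∧
    (1 ≤ k1 * (1 - ρ) / (ρ * (σ - k1 * ρ)) ↔
      ρ ≤ 2 * k1 / (k1 + σ + Real.sqrt ((σ - k1) * (σ + 3 * k1)))) := by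
  obtain ⟨hρ0, hρ1⟩ := hρ
  have hkρ : k1 * ρ < σ := (mul_lt_of_lt_one_right hk1 hρ1).trans hσ
  have minimizer_eq :
      k1 * (1 - ρ) / (ρ * (σ - k1 * ρ)) = k1 * ρ * (1 - ρ) / (ρ ^ 2 * (σ - k1 * ρ)) := by
    have hgap : σ - k1 * ρ ≠ 0 := (sub_pos.2 hkρ).ne'
    field_simp
  exact ⟨fun _ hu hne ↦ rpow_neg_mul_affine_rpow_lt (mul_pos hk1 hρ0) hkρ (sub_pos.2 hρ1)
      (pow_pos hρ0 2) minimizer_eq hu hne,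
    (one_le_div_iff_quadratic_nonneg hρ0 hkρ).trans
      (quadratic_nonneg_iff_le_sqrt_root hk1 hσ.le hρ1)⟩
end

section
/- Fix an integer k1 ≥ 2 and a real σ > (3/2)·k1. Set ρ* := 2k1/( k1 + σ + √((σ−k1)·(σ+3k1)) ) (so ρ* < 1/2), and define K(ρ,σ) := ρ·log(1/ρ) + (1−ρ)·log(1/(1−ρ)) + σ·log(1−ρ+ρ²) and H(ρ,σ) := ρ·log(1/ρ) + (1−ρ)·log(1/(1−ρ)) + σ·log( σ·(1−ρ)/(σ−k1·ρ) ) − k1·ρ·log( k1·(1−ρ)/(ρ·(σ−k1·ρ)) ). Then for every ρ ∈ [ρ*, 1/2]: K(ρ,σ) ≤ K(ρ*,σ) = H(ρ*,σ) < 0. -/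
/-- The exponent function `H(ρ,σ)` from the first-moment bound. -/
noncomputable def Hfun (k1 : ℕ) (ρ σ : ℝ) : ℝ :=
  ρ * Real.log (1 / ρ) + (1 - ρ) * Real.log (1 / (1 - ρ)) +
    σ * Real.log (σ * (1 - ρ) / (σ - k1 * ρ)) -
    k1 * ρ * Real.log (k1 * (1 - ρ) / (ρ * (σ - k1 * ρ)))

/-- The exponent function `K(ρ,σ)` arising when the Chernoff parameter is `u = 1`. -/
noncomputable def Kfun (ρ σ : ℝ) : ℝ :=
  ρ * Real.log (1 / ρ) + (1 - ρ) * Real.log (1 / (1 - ρ)) +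
    σ * Real.log (1 - ρ + ρ ^ 2)

/-!
The Chernoff parameter in `H` is `u = k (1 - ρ) / (ρ (σ - k ρ))`, for which
`σ (1 - ρ) / (σ - k ρ) = 1 - ρ + ρ² u`. The point `ρ*` is the one with `u = 1`, so `H` and `K` agree
there; clearing denominators, this says `σ ρ* = k (1 - ρ* + ρ*²)`.

For the monotonicity of `K`, the bound `log t ≤ t - 1` at `t = (1 - x) / x` gives
`K'(x) ≤ (1 - 2 x) / x - σ (1 - 2 x) / (1 - x + x²)`, which is nonpositive for `x ≤ 1/2` as soon as
`(1 - x + x²) / x ≤ σ`; the left-hand side is decreasing on `(0, 1]`, so it is enough to check this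
at `ρ*`. For the sign, `log t ≤ t - 1` at `t = 1 - ρ + ρ²` gives `K(ρ) ≤ log 2 - σ ρ (1 - ρ)`, and
`σ ρ* (1 - ρ*) ≥ 2 · (3/4) · (1/2) > log 2`.
-/

section Quadratic

lemma three_quarters_le_one_sub_add_sq (x : ℝ) : 3 / 4 ≤ 1 - x + x ^ 2 := by
  linarith [sq_nonneg (x - 1 / 2)]

lemma one_sub_add_sq_pos (x : ℝ) : 0 < 1 - x + x ^ 2 :=
  lt_of_lt_of_le (by norm_num) (three_quarters_le_one_sub_add_sq x)

lemma antitoneOn_one_sub_add_sq_div :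
    AntitoneOn (fun x : ℝ => (1 - x + x ^ 2) / x) (Set.Ioc 0 1) := by
  rintro x ⟨hx0, hx1⟩ y ⟨hy0, hy1⟩ hxy
  have hfactor : 0 ≤ (y - x) * (1 - x * y) :=
    mul_nonneg (sub_nonneg.2 hxy) (sub_nonneg.2 (mul_le_one₀ hx1 hy0.le hy1))
  refine (div_le_div_iff₀ hy0 hx0).2 ?_
  linarith

end Quadratic

section Kfun

variable {r x σ : ℝ}

lemma Kfun_eq_binEntropy_add (ρ σ : ℝ) :
    Kfun ρ σ = Real.binEntropy ρ + σ * Real.log (1 - ρ + ρ ^ 2) := by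
  simp [Kfun, Real.binEntropy]

lemma hasDerivAt_Kfun (hx0 : x ≠ 0) (hx1 : x ≠ 1) (σ : ℝ) :
    HasDerivAt (fun ρ => Kfun ρ σ)
      (Real.log (1 - x) - Real.log x - σ * ((1 - 2 * x) / (1 - x + x ^ 2))) x := by
  simp only [Kfun_eq_binEntropy_add]
  have hquad : HasDerivAt (fun ρ : ℝ => 1 - ρ + ρ ^ 2) (-1 + 2 * x) x := by
    refine (((hasDerivAt_id x).const_sub 1).add (hasDerivAt_pow 2 x)).congr_deriv ?_
    norm_num
  refine ((Real.hasDerivAt_binEntropy hx0 hx1).add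
    ((hquad.log (one_sub_add_sq_pos x).ne').const_mul σ)).congr_deriv ?_
  ring

lemma log_one_sub_sub_log_le (hx0 : 0 < x) (hx1 : x < 1) :
    Real.log (1 - x) - Real.log x ≤ (1 - 2 * x) / x :=
  calc Real.log (1 - x) - Real.log x
      = Real.log ((1 - x) / x) := (Real.log_div (sub_pos.2 hx1).ne' hx0.ne').symm
    _ ≤ (1 - x) / x - 1 := Real.log_le_sub_one_of_pos (div_pos (sub_pos.2 hx1) hx0)
    _ = (1 - 2 * x) / x := by field_simp; ring

lemma deriv_Kfun_nonpos (hx0 : 0 < x) (hx : x ≤ 1 / 2) (h : (1 - x + x ^ 2) / x ≤ σ) :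
    deriv (fun ρ => Kfun ρ σ) x ≤ 0 := by
  have hx1 : x < 1 := by linarith
  have hq := one_sub_add_sq_pos x
  rw [(hasDerivAt_Kfun hx0.ne' hx1.ne σ).deriv, sub_nonpos]
  calc Real.log (1 - x) - Real.log x
      ≤ (1 - 2 * x) / x := log_one_sub_sub_log_le hx0 hx1
    _ = (1 - x + x ^ 2) / x * ((1 - 2 * x) / (1 - x + x ^ 2)) := by field_simp
    _ ≤ σ * ((1 - 2 * x) / (1 - x + x ^ 2)) :=
        mul_le_mul_of_nonneg_right h (div_nonneg (by linarith) hq.le)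

lemma antitoneOn_Kfun (hr : 0 < r) (h : (1 - r + r ^ 2) / r ≤ σ) :
    AntitoneOn (fun ρ => Kfun ρ σ) (Set.Icc r (1 / 2)) := by
  have hdiff : ∀ x ∈ Set.Icc r (1 / 2), DifferentiableAt ℝ (fun ρ => Kfun ρ σ) x := fun x hx =>
    (hasDerivAt_Kfun (hr.trans_le hx.1).ne' (by linarith [hx.2]) σ).differentiableAt
  refine antitoneOn_of_deriv_nonpos (convex_Icc _ _)
    (fun x hx => (hdiff x hx).continuousAt.continuousWithinAt)
    (fun x hx => (hdiff x (interior_subset hx)).differentiableWithinAt) fun x hx => ?_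
  obtain ⟨hrx, hx⟩ := interior_subset hx
  have hx0 : 0 < x := hr.trans_le hrx
  refine deriv_Kfun_nonpos hx0 hx (le_trans ?_ h)
  exact antitoneOn_one_sub_add_sq_div ⟨hr, by linarith⟩ ⟨hx0, by linarith⟩ hrx

lemma Kfun_le_log_two_sub (hσ : 0 ≤ σ) (ρ : ℝ) :
    Kfun ρ σ ≤ Real.log 2 - σ * (ρ * (1 - ρ)) := by
  have hlog : Real.log (1 - ρ + ρ ^ 2) ≤ -(ρ * (1 - ρ)) :=
    (Real.log_le_sub_one_of_pos (one_sub_add_sq_pos ρ)).trans_eq (by ring)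
  calc Kfun ρ σ
      = Real.binEntropy ρ + σ * Real.log (1 - ρ + ρ ^ 2) := Kfun_eq_binEntropy_add ρ σ
    _ ≤ Real.log 2 + σ * -(ρ * (1 - ρ)) :=
        add_le_add Real.binEntropy_le_log_two (mul_le_mul_of_nonneg_left hlog hσ)
    _ = Real.log 2 - σ * (ρ * (1 - ρ)) := by ring

lemma Kfun_neg (hσ : 0 ≤ σ) (hr : r ≤ 1 / 2) (h : 2 * (1 - r + r ^ 2) ≤ σ * r) :
    Kfun r σ < 0 := by
  have hσr : 3 / 2 ≤ σ * r := by linarith [three_quarters_le_one_sub_add_sq r]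
  have henergy : 3 / 4 ≤ σ * (r * (1 - r)) :=
    calc (3 / 4 : ℝ) = 3 / 2 * (1 / 2) := by norm_num
      _ ≤ σ * r * (1 - r) := mul_le_mul hσr (by linarith) (by norm_num) (by linarith)
      _ = σ * (r * (1 - r)) := mul_assoc _ _ _
  linarith [Kfun_le_log_two_sub hσ r, Real.log_two_lt_d9]

lemma mul_one_sub_div_sub_eq (k : ℝ) (hd : σ - k * r ≠ 0) :
    σ * (1 - r) / (σ - k * r) = 1 - r + r ^ 2 * (k * (1 - r) / (r * (σ - k * r))) := by
  calc σ * (1 - r) / (σ - k * r)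
      = (1 - r) * ((σ - k * r) / (σ - k * r)) + k * r * (1 - r) / (σ - k * r) := by ring
    _ = 1 - r + r ^ 2 * (k * (1 - r) / (r * (σ - k * r))) := by
        rw [div_self hd]
        field_simp

lemma Kfun_eq_Hfun {k : ℕ} (hk : 0 < k) (hr0 : 0 < r) (hr1 : r < 1)
    (h : σ * r = k * (1 - r + r ^ 2)) : Kfun r σ = Hfun k r σ := by
  have hroot : k * (1 - r) = r * (σ - k * r) := by linear_combination -h
  have hpos : 0 < r * (σ - k * r) := hroot ▸ mul_pos (Nat.cast_pos.2 hk) (sub_pos.2 hr1)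
  have hd : 0 < σ - k * r := pos_of_mul_pos_right hpos hr0.le
  have hu : k * (1 - r) / (r * (σ - k * r)) = 1 := by rw [hroot, div_self hpos.ne']
  rw [Hfun, Kfun, mul_one_sub_div_sub_eq k hd.ne', hu, Real.log_one, mul_one, mul_zero,
    sub_zero]

end Kfun

/-- The threshold `ρ*`, at which the Chernoff parameter equals `1`: the smaller root of
`k ρ² - (k + σ) ρ + k`, written with the square root in the denominator. -/
noncomputable def rhoStar (k σ : ℝ) : ℝ :=
  2 * k / (k + σ + Real.sqrt ((σ - k) * (σ + 3 * k)))

section rhoStar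

variable {k σ : ℝ}

lemma rhoStar_pos (hk : 0 < k) (hσ : 0 ≤ σ) : 0 < rhoStar k σ := by
  unfold rhoStar
  positivity

lemma mul_rhoStar (hk : 0 < k) (hσ : k ≤ σ) :
    σ * rhoStar k σ = k * (1 - rhoStar k σ + rhoStar k σ ^ 2) := by
  have hsq := Real.sq_sqrt (mul_nonneg (sub_nonneg.2 hσ) (by linarith : 0 ≤ σ + 3 * k))
  have hsqrt := Real.sqrt_nonneg ((σ - k) * (σ + 3 * k))
  unfold rhoStar
  set s := Real.sqrt ((σ - k) * (σ + 3 * k))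
  have hdenom : k + σ + s ≠ 0 := by linarith
  field_simp
  linear_combination -hsq

lemma rhoStar_lt_half (hk : 0 < k) (hσ : 3 / 2 * k < σ) : rhoStar k σ < 1 / 2 := by
  have hsqrt : 3 / 2 * k < Real.sqrt ((σ - k) * (σ + 3 * k)) := by
    refine Real.lt_sqrt_of_sq_lt ?_
    calc (3 / 2 * k) ^ 2 = (3 / 2 * k - k) * (3 / 2 * k + 3 * k) := by ring
      _ < (σ - k) * (σ + 3 * k) :=
          mul_lt_mul'' (by linarith) (by linarith) (by linarith) (by linarith)
  rw [rhoStar, div_lt_div_iff₀ (by linarith) two_pos]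
  linarith

end rhoStar

theorem Kfun_le_at_rhostar (k1 : ℕ) (hk1 : 2 ≤ k1) (σ : ℝ) (hσ : 3 / 2 * k1 < σ) :
    2 * (k1 : ℝ) / (k1 + σ + Real.sqrt ((σ - k1) * (σ + 3 * k1))) < 1 / 2 ∧
    ∀ ρ : ℝ,
      ρ ∈ Set.Icc (2 * (k1 : ℝ) / (k1 + σ + Real.sqrt ((σ - k1) * (σ + 3 * k1)))) (1 / 2) →
      Kfun ρ σ ≤
          Kfun (2 * (k1 : ℝ) / (k1 + σ + Real.sqrt ((σ - k1) * (σ + 3 * k1)))) σ ∧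
        Kfun (2 * (k1 : ℝ) / (k1 + σ + Real.sqrt ((σ - k1) * (σ + 3 * k1)))) σ =
          Hfun k1 (2 * (k1 : ℝ) / (k1 + σ + Real.sqrt ((σ - k1) * (σ + 3 * k1)))) σ ∧
        Hfun k1 (2 * (k1 : ℝ) / (k1 + σ + Real.sqrt ((σ - k1) * (σ + 3 * k1)))) σ < 0 := by
  have hk : (2 : ℝ) ≤ k1 := by exact_mod_cast hk1
  have hk0 : (0 : ℝ) < k1 := by linarith
  have hσ0 : 0 ≤ σ := by linarith
  have hpos := rhoStar_pos hk0 hσ0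
  have hlt := rhoStar_lt_half hk0 hσ
  have hroot := mul_rhoStar hk0 (by linarith : (k1 : ℝ) ≤ σ)
  have hq := one_sub_add_sq_pos (rhoStar k1 σ)
  have htwo : 2 * (1 - rhoStar k1 σ + rhoStar k1 σ ^ 2) ≤ σ * rhoStar k1 σ :=
    hroot ▸ mul_le_mul_of_nonneg_right hk hq.le
  have hanti := antitoneOn_Kfun (σ := σ) hpos ((div_le_iff₀ hpos).2 (by linarith))
  have heq := Kfun_eq_Hfun (by lia) hpos (by linarith) hroot
  exact ⟨hlt, fun ρ hρ =>
    ⟨hanti ⟨le_rfl, hlt.le⟩ hρ hρ.1, heq, heq ▸ Kfun_neg hσ0 hlt.le htwo⟩⟩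
end
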